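/- Let X be a complex Banach space, T a bounded linear operator on X, and (C_m)_{m≥1} a sequence of positive real numbers increasing to +∞. Suppose there exist nonzero vectors (x_m)_{m≥1} in X satisfying: (WNU1) lim_{k→∞} ‖T^k x_m‖ = 0 for every m, and (WNU2) there is a sequence of positive integers (N_m) increasing to +∞ such that lim_{m→∞} #{0 ≤ i ≤ N_m − 1 : ‖T^i x_m‖ ≥ C_m‖x_m‖} / N_m = 1. Then T is distributionally chaotic. -/

import Mathlib

open Filter Topology MeasureTheory
open scoped Classical ENNReal

noncomputable def distFreq {X : Type*} [MetricSpace X] (f : X → X) (x y : X) (τ : ℝ) (n : ℕ) : ℝ :=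
  (((Finset.range n).filter fun i => dist (f^[i] x) (f^[i] y) < τ).card : ℝ) / n

def DistributionallyChaoticPair {X : Type*} [MetricSpace X] (f : X → X) (x y : X) : Prop :=
  (∀ τ : ℝ, 0 < τ → Filter.limsup (distFreq f x y τ) Filter.atTop = 1) ∧
  (∃ ε : ℝ, 0 < ε ∧ Filter.liminf (distFreq f x y ε) Filter.atTop = 0)

def DistributionallyChaotic {X : Type*} [MetricSpace X] (f : X → X) : Prop :=
  ∃ Λ : Set X, ¬Λ.Countable ∧
    ∀ x ∈ Λ, ∀ y ∈ Λ, x ≠ y → DistributionallyChaoticPair f x y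

def LiYorkePair {X : Type*} [MetricSpace X] (f : X → X) (x y : X) : Prop :=
  0 < Filter.limsup (fun n => edist (f^[n] x) (f^[n] y)) Filter.atTop ∧
  Filter.liminf (fun n => edist (f^[n] x) (f^[n] y)) Filter.atTop = 0

def LiYorkeChaotic {X : Type*} [MetricSpace X] (f : X → X) : Prop :=
  ∃ Γ : Set X, ¬Γ.Countable ∧ ∀ x ∈ Γ, ∀ y ∈ Γ, x ≠ y → LiYorkePair f x y

def NormUnimodal {X : Type*} [NormedAddCommGroup X] [NormedSpace ℂ X] (T : X →L[ℂ] X) : Prop :=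
  ∃ r : ℝ, 1 < r ∧ ∀ m : ℕ, ∃ x : X, x ≠ 0 ∧
    Filter.Tendsto (fun k => ‖(T ^ k) x‖) Filter.atTop (nhds 0) ∧
    ∀ i : ℕ, 1 ≤ i → i ≤ m → r ^ i * ‖x‖ ≤ ‖(T ^ i) x‖

lemma aux_limsup {u : ℕ → ℝ} (h1 : ∀ n, u n ≤ 1) (h0 : ∀ n, 0 ≤ u n)
    (h : ∀ k : ℕ, ∃ n, k < n ∧ 1 - 1 / ((k : ℝ) + 1) ≤ u n) : limsup u atTop = 1 := by
  have hb : IsBoundedUnder (· ≤ ·) atTop u := isBoundedUnder_of ⟨1, h1⟩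
  have hc : IsCoboundedUnder (· ≤ ·) atTop u :=
    IsBoundedUnder.isCoboundedUnder_le (isBoundedUnder_of ⟨0, h0⟩)
  apply le_antisymm
  · exact limsup_le_of_le hc (Eventually.of_forall h1)
  · apply le_of_forall_pos_sub_le
    intro e he
    apply le_limsup_of_frequently_le _ hb
    rw [frequently_atTop]
    intro a
    obtain ⟨k, hk⟩ := exists_nat_one_div_lt he
    obtain ⟨n, hn, hun⟩ := h (max a k)
    refine ⟨n, by omega, le_trans ?_ hun⟩
    have : 1 / (((max a k : ℕ) : ℝ) + 1) ≤ 1 / ((k : ℝ) + 1) := by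
      apply one_div_le_one_div_of_le (by positivity)
      have : (k : ℝ) ≤ ((max a k : ℕ) : ℝ) := by exact_mod_cast le_max_right a k
      linarith
    linarith

lemma aux_liminf {u : ℕ → ℝ} (h1 : ∀ n, u n ≤ 1) (h0 : ∀ n, 0 ≤ u n)
    (h : ∀ k : ℕ, ∃ n, k < n ∧ u n ≤ 1 / ((k : ℝ) + 1)) : liminf u atTop = 0 := by
  have hb : IsBoundedUnder (· ≥ ·) atTop u := isBoundedUnder_of ⟨0, h0⟩
  have hc : IsCoboundedUnder (· ≥ ·) atTop u :=
    IsBoundedUnder.isCoboundedUnder_ge (isBoundedUnder_of ⟨1, h1⟩)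
  apply le_antisymm
  · apply le_of_forall_pos_le_add
    intro e he
    rw [zero_add]
    apply liminf_le_of_frequently_le _ hb
    rw [frequently_atTop]
    intro a
    obtain ⟨k, hk⟩ := exists_nat_one_div_lt he
    obtain ⟨n, hn, hun⟩ := h (max a k)
    refine ⟨n, by omega, le_trans hun ?_⟩
    have : 1 / (((max a k : ℕ) : ℝ) + 1) ≤ 1 / ((k : ℝ) + 1) := by
      apply one_div_le_one_div_of_le (by positivity)
      have : (k : ℝ) ≤ ((max a k : ℕ) : ℝ) := by exact_mod_cast le_max_right a k
      linarith
    linarith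
  · exact le_liminf_of_le hc (Eventually.of_forall h0)

section aux
variable {X : Type*} [NormedAddCommGroup X] [NormedSpace ℂ X]

/-- Vectors whose orbit tends to zero. -/
def auxX0 (T : X →L[ℂ] X) : Submodule ℂ X where
  carrier := {v | Tendsto (fun k => (T ^ k) v) atTop (𝓝 0)}
  add_mem' := by
    intro a b ha hb
    simpa using Tendsto.add ha hb
  zero_mem' := by simp
  smul_mem' := by
    intro c a ha
    have h : Tendsto (fun k => c • (T ^ k) a) atTop (𝓝 (c • 0)) := Tendsto.const_smul ha c
    rw [smul_zero] at h
    exact h.congr fun k => (map_smul (T ^ k) c a).symm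

def auxU (T : X →L[ℂ] X) (k : ℕ) : Set X :=
  {z | ∃ n, k < n ∧ ∃ s ⊆ Finset.range n, (1 - 1 / ((k : ℝ) + 1)) * n < s.card ∧
    ∀ i ∈ s, ‖(T ^ i) z‖ < 1 / ((k : ℝ) + 1)}

def auxV (T : X →L[ℂ] X) (k : ℕ) : Set X :=
  {z | ∃ n, k < n ∧ ∃ s ⊆ Finset.range n, (1 - 1 / ((k : ℝ) + 1)) * n < s.card ∧
    ∀ i ∈ s, 1 < ‖(T ^ i) z‖}

lemma auxU_open (T : X →L[ℂ] X) (k : ℕ) : IsOpen (auxU T k) := by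
  rw [isOpen_iff_mem_nhds]
  rintro z ⟨n, hn, s, hs, hc, h⟩
  have : ∀ᶠ w in 𝓝 z, ∀ i ∈ s, ‖(T ^ i) w‖ < 1 / ((k : ℝ) + 1) := by
    rw [Filter.eventually_all_finset]
    intro i hi
    exact ((T ^ i).continuous.norm.tendsto z).eventually_lt_const (h i hi)
  filter_upwards [this] with w hw
  exact ⟨n, hn, s, hs, hc, hw⟩

lemma auxV_open (T : X →L[ℂ] X) (k : ℕ) : IsOpen (auxV T k) := by
  rw [isOpen_iff_mem_nhds]
  rintro z ⟨n, hn, s, hs, hc, h⟩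
  have : ∀ᶠ w in 𝓝 z, ∀ i ∈ s, 1 < ‖(T ^ i) w‖ := by
    rw [Filter.eventually_all_finset]
    intro i hi
    exact ((T ^ i).continuous.norm.tendsto z).eventually_const_lt (h i hi)
  filter_upwards [this] with w hw
  exact ⟨n, hn, s, hs, hc, hw⟩

lemma auxU_mem (T : X →L[ℂ] X) (k : ℕ) {v : X} (hv : v ∈ auxX0 T) : v ∈ auxU T k := by
  have hv' : Tendsto (fun k => ‖(T ^ k) v‖) atTop (𝓝 0) := by
    have : Tendsto (fun k => (T ^ k) v) atTop (𝓝 0) := hv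
    simpa using this.norm
  have hk : (0 : ℝ) < 1 / ((k : ℝ) + 1) := by positivity
  obtain ⟨I, hI⟩ := eventually_atTop.1 (hv'.eventually_lt_const hk)
  refine ⟨(I + 1) * (k + 1), by nlinarith, Finset.Ico I ((I + 1) * (k + 1)), ?_, ?_, ?_⟩
  · intro i hi
    simp only [Finset.mem_Ico] at hi
    simpa using hi.2
  · rw [Nat.card_Ico, Nat.cast_sub (by nlinarith)]
    push_cast
    have : (k : ℝ) + 1 ≠ 0 := by positivity
    field_simp
    nlinarith
  · intro i hi
    exact hI i (Finset.mem_Ico.1 hi).1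

lemma auxV_near (T : X →L[ℂ] X) (k : ℕ) {v : X} (hv : v ∈ auxX0 T)
    (C : ℕ → ℝ) (hCtop : Filter.Tendsto C Filter.atTop Filter.atTop)
    (x : ℕ → X) (hx : ∀ m, x m ≠ 0) (hx0 : ∀ m, x m ∈ auxX0 T)
    (N : ℕ → ℕ) (hNpos : ∀ m, 0 < N m)
    (hNtop : Filter.Tendsto N Filter.atTop Filter.atTop)
    (WNU2 : Filter.Tendsto
      (fun m => (((Finset.range (N m)).filter
          fun i => C m * ‖x m‖ ≤ ‖(T ^ i) (x m)‖).card : ℝ) / N m)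
      Filter.atTop (nhds 1)) {δ : ℝ} (hδ : 0 < δ) :
    ∃ w ∈ auxX0 T, dist v w ≤ δ ∧ w ∈ auxV T k := by
  have hv' : Tendsto (fun k => (T ^ k) v) atTop (𝓝 0) := hv
  obtain ⟨K, hK⟩ := hv'.norm.bddAbove_range
  have hk : 1 - 1 / ((k : ℝ) + 1) < 1 := by
    have : (0 : ℝ) < 1 / ((k : ℝ) + 1) := by positivity
    linarith
  obtain ⟨m, h1, h2, h3⟩ := ((hCtop.eventually_ge_atTop ((K + 2) / δ)).and
    ((hNtop.eventually_gt_atTop k).and (WNU2.eventually_const_lt hk))).exists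
  have hxm : 0 < ‖x m‖ := norm_pos_iff.2 (hx m)
  let c : ℂ := ((δ / ‖x m‖ : ℝ) : ℂ)
  have hc : ‖c‖ = δ / ‖x m‖ := by
    rw [Complex.norm_real, Real.norm_of_nonneg (by positivity)]
  refine ⟨v + c • x m, (auxX0 T).add_mem hv ((auxX0 T).smul_mem c (hx0 m)), ?_, ?_⟩
  · rw [dist_self_add_right, norm_smul, hc]
    exact (div_mul_cancel₀ δ hxm.ne').le
  · refine ⟨N m, h2, (Finset.range (N m)).filter
          fun i => C m * ‖x m‖ ≤ ‖(T ^ i) (x m)‖, Finset.filter_subset _ _, ?_, ?_⟩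
    · exact (lt_div_iff₀ (by exact_mod_cast hNpos m)).1 h3
    · intro i hi
      have hi := (Finset.mem_filter.1 hi).2
      have hKi : ‖(T ^ i) v‖ ≤ K := hK ⟨i, rfl⟩
      have e : (T ^ i) (v + c • x m) = c • (T ^ i) (x m) + (T ^ i) v := by
        rw [map_add, map_smul, add_comm]
      have h4 : K + 2 ≤ ‖c • (T ^ i) (x m)‖ := by
        rw [norm_smul, hc]
        calc K + 2 ≤ C m * δ := (div_le_iff₀ hδ).1 h1
          _ = δ / ‖x m‖ * (C m * ‖x m‖) := by field_simp
          _ ≤ _ := by gcongr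
      rw [e]
      have h5 := norm_sub_le (c • (T ^ i) (x m) + (T ^ i) v) ((T ^ i) v)
      rw [add_sub_cancel_right] at h5
      linarith

lemma aux_final (T : X →L[ℂ] X) (z : X) (hU : ∀ k, z ∈ auxU T k) (hV : ∀ k, z ∈ auxV T k) :
    DistributionallyChaotic (fun z => T z) := by
  have hz : z ≠ 0 := by
    rintro rfl
    obtain ⟨n, hn, s, hs, hc, h⟩ := hV 0
    simp only [map_zero, norm_zero] at h
    have : s = ∅ := Finset.eq_empty_of_forall_notMem fun i hi => by linarith [h i hi]
    simp [this] at hc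
  have hit : ∀ (i : ℕ) (y : X), (fun z => T z)^[i] y = (T ^ i) y := by
    intro i y
    induction i with
    | zero => simp
    | succ i ih => rw [Function.iterate_succ_apply', ih, pow_succ']; rfl
  refine ⟨Set.range fun t : ℝ => (t : ℂ) • z, ?_, ?_⟩
  · intro hcount
    have hinj : Function.Injective fun t : ℝ => (t : ℂ) • z := by
      intro a b hab
      exact Complex.ofReal_injective (smul_left_injective ℂ hz hab)
    have h2 : (Set.univ : Set ℝ).Countable := by
      apply Set.countable_of_injective_of_countable_image hinj.injOn
      rwa [Set.image_univ]
    exact Cardinal.not_countable_real h2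
  · rintro _ ⟨a, rfl⟩ _ ⟨b, rfl⟩ hab
    have hne : a - b ≠ 0 := by
      intro h
      exact hab (by rw [sub_eq_zero.1 h])
    have hd : 0 < |a - b| := abs_pos.2 hne
    have hdist : ∀ i : ℕ, dist ((fun z => T z)^[i] ((a : ℂ) • z)) ((fun z => T z)^[i] ((b : ℂ) • z))
        = |a - b| * ‖(T ^ i) z‖ := by
      intro i
      rw [hit, hit, dist_eq_norm, map_smul, map_smul, ← sub_smul, norm_smul,
        ← Complex.ofReal_sub, Complex.norm_real, Real.norm_eq_abs]
    have h0 : ∀ τ n, 0 ≤ distFreq (fun z => T z) ((a : ℂ) • z) ((b : ℂ) • z) τ n := by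
      intro τ n
      unfold distFreq
      positivity
    have h1 : ∀ τ n, distFreq (fun z => T z) ((a : ℂ) • z) ((b : ℂ) • z) τ n ≤ 1 := by
      intro τ n
      unfold distFreq
      apply div_le_one_of_le₀ _ (by positivity)
      have := Finset.card_filter_le (Finset.range n) fun i =>
        dist ((fun z => T z)^[i] ((a : ℂ) • z)) ((fun z => T z)^[i] ((b : ℂ) • z)) < τ
      rw [Finset.card_range] at this
      exact_mod_cast this
    constructor
    · intro τ hτ
      apply aux_limsup (h1 τ) (h0 τ)
      intro k
      obtain ⟨l, hl⟩ := exists_nat_one_div_lt (div_pos hτ hd)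
      obtain ⟨n, hn, s, hs, hc, h⟩ := hU (max k l)
      have hmono : ∀ j : ℕ, j ≤ max k l →
          1 / (((max k l : ℕ) : ℝ) + 1) ≤ 1 / ((j : ℝ) + 1) := by
        intro j hj
        apply one_div_le_one_div_of_le (by positivity)
        have : (j : ℝ) ≤ ((max k l : ℕ) : ℝ) := by exact_mod_cast hj
        linarith
      refine ⟨n, by omega, ?_⟩
      have hn0 : (0 : ℝ) < n := by exact_mod_cast (by omega : 0 < n)
      unfold distFreq
      rw [le_div_iff₀ hn0]
      have hsub : s ⊆ (Finset.range n).filter fun i =>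
          dist ((fun z => T z)^[i] ((a : ℂ) • z)) ((fun z => T z)^[i] ((b : ℂ) • z)) < τ := by
        intro i hi
        refine Finset.mem_filter.2 ⟨hs hi, ?_⟩
        rw [hdist, mul_comm]
        exact (lt_div_iff₀ hd).1 ((h i hi).trans_le ((hmono l (le_max_right _ _)).trans hl.le))
      have hcard : (s.card : ℝ) ≤ _ := Nat.cast_le.2 (Finset.card_le_card hsub)
      refine le_trans ?_ (hc.le.trans hcard)
      have := hmono k (le_max_left _ _)
      gcongr
    · refine ⟨|a - b|, hd, ?_⟩
      apply aux_liminf (h1 _) (h0 _)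
      intro k
      obtain ⟨n, hn, s, hs, hc, h⟩ := hV k
      refine ⟨n, hn, ?_⟩
      have hn0 : (0 : ℝ) < n := by exact_mod_cast (by omega : 0 < n)
      unfold distFreq
      rw [div_le_iff₀ hn0]
      have hsub : ((Finset.range n).filter fun i =>
          dist ((fun z => T z)^[i] ((a : ℂ) • z)) ((fun z => T z)^[i] ((b : ℂ) • z)) < |a - b|)
          ⊆ Finset.range n \ s := by
        intro i hi
        obtain ⟨hi1, hi2⟩ := Finset.mem_filter.1 hi
        refine Finset.mem_sdiff.2 ⟨hi1, fun his => ?_⟩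
        rw [hdist] at hi2
        nlinarith [h i his]
      have hcard := Finset.card_le_card hsub
      have hcs := Finset.card_sdiff_add_card_eq_card hs
      rw [Finset.card_range] at hcs
      have hcs' : ((Finset.range n \ s).card : ℝ) + s.card = n := by exact_mod_cast hcs
      have hcard' := (Nat.cast_le (α := ℝ)).2 hcard
      refine hcard'.trans ?_
      linarith

end aux

/-- Weakly Distributionally Chaotic Criterion. -/
theorem stmt_1 {X : Type*} [NormedAddCommGroup X] [NormedSpace ℂ X] [CompleteSpace X]
    (T : X →L[ℂ] X) (C : ℕ → ℝ) (hCpos : ∀ m, 0 < C m) (hCmono : Monotone C)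
    (hCtop : Filter.Tendsto C Filter.atTop Filter.atTop)
    (x : ℕ → X) (hx : ∀ m, x m ≠ 0)
    (WNU1 : ∀ m, Filter.Tendsto (fun k => ‖(T ^ k) (x m)‖) Filter.atTop (nhds 0))
    (N : ℕ → ℕ) (hNpos : ∀ m, 0 < N m) (hNmono : Monotone N)
    (hNtop : Filter.Tendsto N Filter.atTop Filter.atTop)
    (WNU2 : Filter.Tendsto
      (fun m => (((Finset.range (N m)).filter
          fun i => C m * ‖x m‖ ≤ ‖(T ^ i) (x m)‖).card : ℝ) / N m)
      Filter.atTop (nhds 1)) :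
    DistributionallyChaotic (fun z => T z) := by
  have hx0 : ∀ m, x m ∈ auxX0 T := fun m => tendsto_zero_iff_norm_tendsto_zero.2 (WNU1 m)
  let Y := (auxX0 T).topologicalClosure
  have : CompleteSpace Y := (auxX0 T).isClosed_topologicalClosure.completeSpace_coe
  have hY : ∀ y : Y, ∀ r > 0, ∃ v ∈ auxX0 T, dist (y : X) v < r := by
    intro y r hr
    exact Metric.mem_closure_iff.1 y.2 r hr
  let W : ℕ → Set Y := fun k => (Subtype.val ⁻¹' auxU T k) ∩ (Subtype.val ⁻¹' auxV T k)
  have hUo : ∀ k, IsOpen (Subtype.val ⁻¹' auxU T k : Set Y) := fun k =>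
    (auxU_open T k).preimage continuous_subtype_val
  have hVo : ∀ k, IsOpen (Subtype.val ⁻¹' auxV T k : Set Y) := fun k =>
    (auxV_open T k).preimage continuous_subtype_val
  have hUd : ∀ k, Dense (Subtype.val ⁻¹' auxU T k : Set Y) := by
    intro k
    rw [Metric.dense_iff]
    intro y r hr
    obtain ⟨v, hv, hd⟩ := hY y r hr
    refine ⟨⟨v, (auxX0 T).le_topologicalClosure hv⟩, ?_, auxU_mem T k hv⟩
    rw [Metric.mem_ball, dist_comm]
    exact hd
  have hVd : ∀ k, Dense (Subtype.val ⁻¹' auxV T k : Set Y) := by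
    intro k
    rw [Metric.dense_iff]
    intro y r hr
    obtain ⟨v, hv, hd⟩ := hY y (r / 2) (by positivity)
    obtain ⟨w, hw, hd2, hwV⟩ := auxV_near T k hv C hCtop x hx hx0 N hNpos hNtop WNU2
      (δ := r / 2) (by positivity)
    refine ⟨⟨w, (auxX0 T).le_topologicalClosure hw⟩, ?_, hwV⟩
    rw [Metric.mem_ball, dist_comm]
    have : dist (y : X) w < r := by linarith [dist_triangle (y : X) v w]
    exact this
  have hW : Dense (⋂ k, W k) := dense_iInter_of_isOpen_nat (fun k => (hUo k).inter (hVo k))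
    (fun k => (hUd k).inter_of_isOpen_left (hVd k) (hUo k))
  obtain ⟨z, hz⟩ := hW.nonempty
  rw [Set.mem_iInter] at hz
  exact aux_final T z (fun k => (hz k).1) (fun k => (hz k).2)
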